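/- Let n ≥ 9. The stabilizer problem on ℚⁿ is undecidable: there is no computable function which, given as input a finite list X of invertible n×n matrices with rational entries together with a vector u ∈ ℚⁿ, decides whether the stabilizer Stab_{⟨X⟩}(u) = {g ∈ ⟨X⟩ : g·u = u} is the trivial group, i.e. whether some non-identity element of the subgroup ⟨X⟩ generated by X fixes u. -/

import Mathlib

/-- Rational matrices are primcodable (natural effective encoding of matrices). -/
noncomputable instance matQPrimcodable (n : ℕ) :
    Primcodable (Matrix (Fin n) (Fin n) ℚ) :=
  Primcodable.finArrow

/-!
A Turing machine is simulated by a finite system of reversible rules `(p, a + d v) ↔ (q, a' + d' v)`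
between configurations that consist of a state and two integers, the two halves of the tape.
Such a system is turned into a finitely presented group in which letters `x`, `y` shift the two
integers, a letter for each rule conjugates one family of configurations to the other, and a letter
`k` commutes with the element `t` of a configuration if the configuration is connected to a base
configuration. If it is not connected, then `t ^ m = k t ^ n k⁻¹` only for `m = n = 0`: this is seen
in a wreath product of `SL(2, ℤ)` with permutations of copies of `ℤ × ℤ` marked by the connected
configurations.

For the quotient map `F → Γ` of a free group onto this group, the fibre square
`F ×_Γ F ≤ F × F` is finitely generated. Let `F` act on `ℚ²` through shears that play ping-pong. An
element that fixes the vector along the shear of a generator has a power in the cyclic group of that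
generator, so some nontrivial pair in the fibre square fixes a suitable pair of vectors exactly when
the configuration is connected. As the vectors depend computably on the configuration, a single
finitely generated subgroup of `SL(2, ℚ) × SL(2, ℚ) ≤ GL(4, ℚ)` already has an undecidable
stabilizer problem.
-/

section RationalVectors

theorem mem_range_encode_rat_iff (m : ℕ) :
    m ∈ Set.range (@Encodable.encode ℚ Rat.instEncodable) ↔
      0 < m.unpair.2 ∧ ((m.unpair.1 + 1) / 2).Coprime m.unpair.2 := by
  have natAbs_eq : ∀ z : ℤ, (Encodable.encode z + 1) / 2 = z.natAbs := by
    rintro (k | k)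
    · change (2 * k + 1) / 2 = k; lia
    · change (2 * k + 1 + 1) / 2 = k + 1; lia
  constructor
  · rintro ⟨q, rfl⟩
    have hq : (@Encodable.encode ℚ Rat.instEncodable q).unpair = (Encodable.encode q.num, q.den) :=
      Nat.unpair_pair _ _
    rw [hq]
    exact ⟨q.pos, by simpa only [natAbs_eq] using q.reduced⟩
  · rintro ⟨hpos, hcop⟩
    let z : ℤ := Denumerable.ofNat ℤ m.unpair.1
    have hz : Encodable.encode z = m.unpair.1 := Denumerable.encode_ofNat _
    refine ⟨⟨z, m.unpair.2, hpos.ne', by rwa [← natAbs_eq, hz]⟩, ?_⟩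
    change Nat.pair (Encodable.encode z) m.unpair.2 = m
    rw [hz, Nat.pair_unpair]

theorem primrecRel_coprime : PrimrecRel Nat.Coprime := by
  have common_divisor : PrimrecRel fun (e : ℕ) (p : ℕ × ℕ) =>
      p.1 % e = 0 → p.2 % e = 0 → e = 1 := by
    have hdvd : PrimrecRel fun e n : ℕ => n % e = 0 :=
      Primrec.eq.comp (Primrec.nat_mod.comp .snd .fst) (.const 0)
    exact ((hdvd.comp .fst (Primrec.fst.comp .snd)).not.or
      ((hdvd.comp .fst (Primrec.snd.comp .snd)).not.or
        (Primrec.eq.comp .fst (.const 1)))).of_eq fun q => by tauto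
  have hrange : Primrec fun p : ℕ × ℕ => List.range (p.1 + p.2).succ :=
    Primrec.list_range.comp (Primrec.succ.comp (Primrec.nat_add.comp .fst .snd))
  refine PrimrecPred.of_eq (common_divisor.forall_mem_list.comp hrange .id) ?_
  rintro ⟨a, b⟩
  simp only [id, List.mem_range, ← Nat.dvd_iff_mod_eq_zero, Nat.lt_succ_iff]
  refine ⟨fun h => ?_, fun h e _ ha hb => Nat.eq_one_of_dvd_coprimes h ha hb⟩
  rcases Nat.eq_zero_or_pos (a + b) with h0 | h0
  · obtain ⟨rfl, rfl⟩ : a = 0 ∧ b = 0 := by lia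
    simpa using h 0
  · exact h _ (Nat.le_of_dvd h0 (dvd_add (Nat.gcd_dvd_left a b) (Nat.gcd_dvd_right a b)))
      (Nat.gcd_dvd_left a b) (Nat.gcd_dvd_right a b)

-- The `Primcodable` structure of `ℚ` comes from `Denumerable`: a rational is encoded by the rank
-- of its code `Nat.pair num den` in the range of that coding, which is primitive recursive.
theorem primrec_of_num_den {α : Type*} [Primcodable α] {f : α → ℚ}
    (hnum : Primrec fun a => Encodable.encode (f a).num) (hden : Primrec fun a => (f a).den) :
    Primrec f := by
  classical
  have hmem : PrimrecPred fun m : ℕ =>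
      m ∈ Set.range (@Encodable.encode ℚ Rat.instEncodable) := by
    refine PrimrecPred.of_eq (PrimrecPred.and ?_ ?_) fun m => (mem_range_encode_rat_iff m).symm
    · exact Primrec.nat_lt.comp (.const 0) (Primrec.snd.comp .unpair)
    · exact primrecRel_coprime.comp (Primrec.nat_div.comp
        (Primrec.succ.comp (Primrec.fst.comp .unpair)) (.const 2)) (Primrec.snd.comp .unpair)
  have hrank := Primrec.list_length.comp ((Primrec.listFilter hmem).comp
    (Primrec.list_range.comp (Primrec₂.natPair.comp hnum hden)))
  rw [← Primrec.encode_iff]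
  refine hrank.of_eq fun a => ?_
  change _ = @List.countP ℕ (fun m => @decide
    (m ∈ Set.range (@Encodable.encode ℚ Rat.instEncodable)) (Encodable.decidableRangeEncode ℚ m))
    (List.range (Nat.pair (Encodable.encode (f a).num) (f a).den))
  rw [List.countP_eq_length_filter]
  congr!

theorem primrec_ratCast : Primrec (Nat.cast : ℕ → ℚ) :=
  primrec_of_num_den
    (((Primrec.nat_mul.comp (.const 2) .id)).of_eq fun _ => rfl)
    ((Primrec.const 1).of_eq fun _ => rfl)

theorem primrec_pi_fin {α σ : Type*} [Primcodable α] [Primcodable σ] {n : ℕ}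
    {f : α → Fin n → σ} (hf : ∀ i, Primrec fun a => f a i) : Primrec f := by
  have h : Primrec₂ fun (i : Fin n) a => f a i := Primrec.fin_curry₁.2 hf
  exact Primrec.fin_curry.2 (h.comp .snd .fst)

end RationalVectors

section RegisterSystems

/-- The family of configurations `(state, a + d * v₁, b + e * v₂)` with `v₁ v₂ : ℤ`; since `a` and
`b` are residues, the moduli `d` and `e` are positive. -/
structure ConfigFamily (Q : Type*) where
  state : Q
  d : ℕ
  e : ℕ
  a : Fin d
  b : Fin e

namespace ConfigFamily

variable {Q : Type*} (P : ConfigFamily Q)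

/-- The pair of residues of the family, which is also its member with parameters `(0, 0)`. -/
def offset : ℤ × ℤ := (P.a, P.b)

/-- The displacement of the registers produced by the parameters `v`. -/
def scale (v : ℤ × ℤ) : ℤ × ℤ := (P.d * v.1, P.e * v.2)

/-- The pair of registers of the member of the family with parameters `v`. -/
def regs (v : ℤ × ℤ) : ℤ × ℤ := P.offset + P.scale v

end ConfigFamily

/-- A system of reversible rules `(src i).regs v ↔ (dst i).regs v` between configurations that
consist of a state in `Q` and two integer registers. The base configurations are those with a state
in `base` and both registers zero. -/
structure RegisterSystem (Q R : Type*) where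
  src : R → ConfigFamily Q
  dst : R → ConfigFamily Q
  base : Set Q

namespace RegisterSystem

variable {Q R G H : Type*} [Group G] [Group H]

/-- The configurations from which a base configuration can be reached, applying the rules in
either direction. -/
inductive Conn (S : RegisterSystem Q R) : Q × ℤ × ℤ → Prop
  | base {q : Q} : q ∈ S.base → S.Conn (q, 0)
  | fwd (i : R) (v : ℤ × ℤ) :
      S.Conn ((S.src i).state, (S.src i).regs v) → S.Conn ((S.dst i).state, (S.dst i).regs v)
  | bwd (i : R) (v : ℤ × ℤ) :
      S.Conn ((S.dst i).state, (S.dst i).regs v) → S.Conn ((S.src i).state, (S.src i).regs v)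

theorem conn_src_iff_dst (S : RegisterSystem Q R) (i : R) (v : ℤ × ℤ) :
    S.Conn ((S.src i).state, (S.src i).regs v) ↔ S.Conn ((S.dst i).state, (S.dst i).regs v) :=
  ⟨.fwd i v, .bwd i v⟩

/-- The letters of the group presentation attached to a register system: `x` and `y` shift the
registers, `k` detects the base configurations, and there are letters for states and rules. -/
inductive Letter (Q R : Type*) where
  | x : Letter Q R
  | y : Letter Q R
  | k : Letter Q R
  | t : Q → Letter Q R
  | r : R → Letter Q R

/-- The letters as a disjoint union. -/
def Letter.toSum : Letter Q R → Fin 3 ⊕ Q ⊕ R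
  | .k => .inl 0
  | .y => .inl 1
  | .x => .inl 2
  | .t q => .inr (.inl q)
  | .r i => .inr (.inr i)

theorem Letter.toSum_injective : Function.Injective (toSum : Letter Q R → Fin 3 ⊕ Q ⊕ R) := by
  rintro (_ | _ | _ | _ | _) (_ | _ | _ | _ | _) h <;> simp_all [toSum]

instance [Finite Q] [Finite R] : Finite (Letter Q R) :=
  Finite.of_injective _ Letter.toSum_injective

theorem map_conj_apply (φ : G →* H) (a b : G) :
    φ (MulAut.conj a b) = MulAut.conj (φ a) (φ b) := by
  simp only [MulAut.conj_apply, map_mul, map_inv]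

/-- The element `x ^ v₁ * y ^ v₂ * t q * (x ^ v₁ * y ^ v₂)⁻¹` that represents the configuration
`(q, v)` under an assignment `f` of the letters. -/
def shifted (f : Letter Q R → G) (q : Q) (v : ℤ × ℤ) : G :=
  MulAut.conj (f .x ^ v.1 * f .y ^ v.2) (f (.t q))

theorem map_shifted (φ : G →* H) (f : Letter Q R → G) (q : Q) (v : ℤ × ℤ) :
    φ (shifted f q v) = shifted (φ ∘ f) q v := by
  simp only [shifted, map_conj_apply, map_mul φ, map_zpow φ, Function.comp_apply]

theorem shifted_add {f : Letter Q R → G} (hxy : Commute (f .x) (f .y)) (q : Q) (v w : ℤ × ℤ) :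
    shifted f q (v + w) = MulAut.conj (f .x ^ w.1 * f .y ^ w.2) (shifted f q v) := by
  rw [shifted, shifted, ← MulAut.mul_apply, ← map_mul, add_comm, Prod.fst_add, Prod.snd_add,
    zpow_add, zpow_add, (hxy.zpow_zpow v.1 w.2).mul_mul_mul_comm]

variable (S : RegisterSystem Q R)

/-- The assignment `f` of the letters satisfies the relations of the group attached to `S`. -/
structure Satisfies (f : Letter Q R → G) : Prop where
  x_y : Commute (f .x) (f .y)
  k_r : ∀ i, Commute (f .k) (f (.r i))
  k_t : ∀ q ∈ S.base, Commute (f .k) (f (.t q))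
  r_x : ∀ i, MulAut.conj (f (.r i)) (f .x ^ (S.src i).d) = f .x ^ (S.dst i).d
  r_y : ∀ i, MulAut.conj (f (.r i)) (f .y ^ (S.src i).e) = f .y ^ (S.dst i).e
  r_t : ∀ i, MulAut.conj (f (.r i)) (shifted f (S.src i).state (S.src i).offset) =
    shifted f (S.dst i).state (S.dst i).offset

/-- The relators of the group attached to `S`, the words that express `Satisfies`. -/
def relators : Set (FreeGroup (Letter Q R)) :=
  let f : Letter Q R → FreeGroup (Letter Q R) := FreeGroup.of
  {MulAut.conj (f .x) (f .y) / f .y} ∪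
    Set.range (fun i => MulAut.conj (f .k) (f (.r i)) / f (.r i)) ∪
    (fun q => MulAut.conj (f .k) (f (.t q)) / f (.t q)) '' S.base ∪
    Set.range (fun i => MulAut.conj (f (.r i)) (f .x ^ (S.src i).d) / f .x ^ (S.dst i).d) ∪
    Set.range (fun i => MulAut.conj (f (.r i)) (f .y ^ (S.src i).e) / f .y ^ (S.dst i).e) ∪
    Set.range (fun i => MulAut.conj (f (.r i)) (shifted f (S.src i).state (S.src i).offset) /
      shifted f (S.dst i).state (S.dst i).offset)

theorem finite_relators [Finite Q] [Finite R] : S.relators.Finite :=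
  (((((Set.finite_singleton _).union (Set.finite_range _)).union (Set.toFinite _)).union
    (Set.finite_range _)).union (Set.finite_range _)).union (Set.finite_range _)

theorem satisfies_iff (f : Letter Q R → G) :
    S.Satisfies f ↔ ∀ w ∈ S.relators, FreeGroup.lift f w = 1 := by
  have lift_comp_of : FreeGroup.lift f ∘ FreeGroup.of = f := by ext; simp
  have conj_eq_iff : ∀ a b : G, MulAut.conj a b = b ↔ Commute a b :=
    fun a b => mul_inv_eq_iff_eq_mul
  simp only [relators, Set.mem_union, or_imp, forall_and, Set.forall_mem_range,
    Set.forall_mem_image, Set.mem_singleton_iff, forall_eq, map_div, div_eq_one, map_shifted,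
    map_conj_apply, map_pow (FreeGroup.lift f), FreeGroup.lift_apply_of, lift_comp_of,
    conj_eq_iff]
  exact ⟨fun ⟨h₁, h₂, h₃, h₄, h₅, h₆⟩ => ⟨⟨⟨⟨⟨h₁, h₂⟩, h₃⟩, h₄⟩, h₅⟩, h₆⟩,
    fun ⟨⟨⟨⟨⟨h₁, h₂⟩, h₃⟩, h₄⟩, h₅⟩, h₆⟩ => ⟨h₁, h₂, h₃, h₄, h₅, h₆⟩⟩

theorem satisfies_of : S.Satisfies (PresentedGroup.of (rels := S.relators)) :=
  (S.satisfies_iff _).2 fun w hw => by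
    have lift_of : FreeGroup.lift PresentedGroup.of = PresentedGroup.mk S.relators :=
      FreeGroup.ext_hom _ _ fun a => FreeGroup.lift_apply_of
    rw [lift_of]
    exact PresentedGroup.one_of_mem hw

namespace Satisfies

variable {S} {f : Letter Q R → G} (hf : S.Satisfies f)
include hf

theorem conj_shifted (i : R) (v : ℤ × ℤ) :
    MulAut.conj (f (.r i)) (shifted f (S.src i).state ((S.src i).regs v)) =
      shifted f (S.dst i).state ((S.dst i).regs v) := by
  have conj_scale : MulAut.conj (f (.r i))
      (f .x ^ ((S.src i).scale v).1 * f .y ^ ((S.src i).scale v).2) =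
        f .x ^ ((S.dst i).scale v).1 * f .y ^ ((S.dst i).scale v).2 := by
    simp only [ConfigFamily.scale, zpow_mul, zpow_natCast, map_mul, map_zpow, hf.r_x, hf.r_y]
  rw [ConfigFamily.regs, ConfigFamily.regs, shifted_add hf.x_y, shifted_add hf.x_y, ← hf.r_t,
    ← conj_scale]
  exact map_conj_apply (MulAut.conj (f (.r i))).toMonoidHom _ _

theorem commute_src_iff_dst (i : R) (v : ℤ × ℤ) :
    Commute (f .k) (shifted f (S.src i).state ((S.src i).regs v)) ↔
      Commute (f .k) (shifted f (S.dst i).state ((S.dst i).regs v)) := by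
  have conj_k : MulAut.conj (f (.r i)) (f .k) = f .k :=
    mul_inv_eq_iff_eq_mul.2 (hf.k_r i).symm
  rw [← hf.conj_shifted, ← commute_map_iff (MulAut.conj (f (.r i))).injective,
    conj_k]

theorem commute_of_conn {c : Q × ℤ × ℤ} (hc : S.Conn c) :
    Commute (f .k) (shifted f c.1 c.2) := by
  induction hc with
  | base hq => simpa [shifted] using hf.k_t _ hq
  | fwd i v _ ih => exact (hf.commute_src_iff_dst i v).1 ih
  | bwd i v _ ih => exact (hf.commute_src_iff_dst i v).2 ih

end Satisfies

/-! ### A model in which `k` separates the unconnected configurations -/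

theorem exists_equiv_prod_of_fiber {A W I : Type*} (π : A → W)
    (h : ∀ w, Nonempty ({a // π a = w} ≃ I)) (a₀ : A) (i₀ : I) :
    ∃ θ : A ≃ W × I, (∀ a, (θ a).1 = π a) ∧ θ a₀ = (π a₀, i₀) := by
  classical
  have pointed : ∀ w, ∃ e : {a // π a = w} ≃ I, ∀ hw : π a₀ = w, e ⟨a₀, hw⟩ = i₀ := by
    intro w
    obtain ⟨e⟩ := h w
    by_cases hw : π a₀ = w
    · exact ⟨e.trans (Equiv.swap (e ⟨a₀, hw⟩) i₀), fun _ => by simp⟩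
    · exact ⟨e, fun hw' => absurd hw' hw⟩
  choose e he using pointed
  exact ⟨(Equiv.sigmaFiberEquiv π).symm.trans
    ((Equiv.sigmaCongrRight e).trans (Equiv.sigmaEquivProd W I)), fun a => rfl,
    Prod.ext rfl (he _ rfl)⟩

/-- The points of the model: a set of register values, an index that makes all the fibres which
occur equinumerous, and a position. -/
abbrev ModelPoint : Type := (Set (ℤ × ℤ) × Set (ℤ × ℤ)) × ℤ × ℤ

/-- A point of the model is marked if its position belongs to its set of register values. -/
def Marked (p : ModelPoint) : Prop := p.2 ∈ p.1.1

/-- The action of `ℤ × ℤ` on the points of the model that translates the positions. -/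
def translate : Multiplicative (ℤ × ℤ) →* Equiv.Perm ModelPoint where
  toFun v := Equiv.prodCongr (Equiv.refl _) (Equiv.addRight v.toAdd)
  map_one' := Equiv.ext fun _ => Prod.ext rfl (add_zero _)
  map_mul' v w := Equiv.ext fun p => Prod.ext rfl <| by
    simp [add_comm v.toAdd, add_assoc]

theorem translate_apply (v : ℤ × ℤ) (p : ModelPoint) :
    translate (.ofAdd v) p = (p.1, p.2 + v) := rfl

variable (P : ConfigFamily Q)

/-- A pair of integers as a pair of quotients followed by a pair of residues modulo `d` and `e`. -/
def divMod : ℤ × ℤ ≃ (ℤ × ℤ) × Fin P.d × Fin P.e :=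
  have : NeZero P.d := ⟨P.a.pos.ne'⟩
  have : NeZero P.e := ⟨P.b.pos.ne'⟩
  (Equiv.prodCongr (Int.divModEquiv P.d) (Int.divModEquiv P.e)).trans
    (Equiv.prodProdProdComm _ _ _ _)

theorem divMod_symm_apply (v : ℤ × ℤ) (β : Fin P.d × Fin P.e) :
    (divMod P).symm (v, β) = ((β.1 : ℤ), (β.2 : ℤ)) + P.scale v := by
  ext <;> exact (add_comm _ _).trans (congrArg _ (mul_comm _ _))

/-- The restriction of a set of register values to the family with the same moduli as `P` and
residues `β`. -/
def restrict (c : (Set (ℤ × ℤ) × Set (ℤ × ℤ)) × Fin P.d × Fin P.e) : Set (ℤ × ℤ) :=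
  {v | (divMod P).symm (v, c.2) ∈ c.1.1}

open Cardinal in
theorem nonempty_fiber_restrict_equiv (w : Set (ℤ × ℤ)) :
    Nonempty ({c // restrict P c = w} ≃ Set (ℤ × ℤ)) := by
  refine Cardinal.eq.1 (le_antisymm ((mk_subtype_le _).trans ?_) ?_)
  · have h : Cardinal.mk (Set (ℤ × ℤ)) = 𝔠 := by simp
    have h0 : Cardinal.mk (Fin P.d × Fin P.e) ≤ 𝔠 :=
      (lt_aleph0_of_finite _).le.trans aleph0_le_continuum
    rw [mk_prod, lift_id, lift_id, mk_prod, lift_id, h, continuum_mul_self]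
    exact (mul_le_mul_right h0 _).trans continuum_mul_self.le
  · let c (i : Set (ℤ × ℤ)) := (({v | (divMod P v).1 ∈ w}, i), (P.a, P.b))
    refine mk_le_of_injective (f := fun i => ⟨c i, ?_⟩) fun i i' h => ?_
    · simp [restrict, c]
    · simpa [c] using h

theorem exists_chart (H : Set (ℤ × ℤ)) :
    ∃ E : Equiv.Perm ModelPoint, (∀ p, Marked (E p) ↔ Marked p) ∧
      (∀ v p, E (translate (.ofAdd (P.scale v)) p) = translate (.ofAdd v) (E p)) ∧
      E ((H, ∅), P.offset) = (({v | P.regs v ∈ H}, ∅), 0) := by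
  obtain ⟨θ, hθ, hθ₀⟩ := exists_equiv_prod_of_fiber (restrict P) (nonempty_fiber_restrict_equiv P)
    ((H, ∅), (P.a, P.b)) ∅
  let E : Equiv.Perm ModelPoint :=
    (Equiv.prodCongr (Equiv.refl _) ((divMod P).trans (Equiv.prodComm _ _))).trans
      ((Equiv.prodAssoc _ _ _).symm.trans (Equiv.prodCongr θ (Equiv.refl _)))
  have hE : ∀ c v β, E (c, (divMod P).symm (v, β)) = (θ (c, β), v) := fun c v β => by simp [E]
  refine ⟨E, ?_, ?_, ?_⟩
  · rintro ⟨c, v⟩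
    obtain ⟨⟨v, β⟩, rfl⟩ := (divMod P).symm.surjective v
    simp only [hE, Marked, hθ, restrict, Set.mem_ofPred_eq]
  · rintro v ⟨c, w⟩
    obtain ⟨⟨w, β⟩, rfl⟩ := (divMod P).symm.surjective w
    have scale_add : P.scale (w + v) = P.scale w + P.scale v :=
      Prod.ext (mul_add _ _ _) (mul_add _ _ _)
    have shift : (divMod P).symm (w, β) + P.scale v = (divMod P).symm (w + v, β) := by
      rw [divMod_symm_apply, divMod_symm_apply, scale_add, add_assoc]
    rw [translate_apply, translate_apply, shift, hE, hE]
  · have scale_zero : P.scale 0 = 0 := Prod.ext (mul_zero _) (mul_zero _)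
    have h0 : P.offset = (divMod P).symm (0, (P.a, P.b)) := by
      rw [divMod_symm_apply, scale_zero, add_zero]; rfl
    rw [h0, hE, hθ₀]
    simp only [restrict, divMod_symm_apply, ConfigFamily.regs, ConfigFamily.offset]

/-- The model point at the registers of `c` whose marks record which configurations with the state
of `c` are connected. -/
def modelPoint (c : Q × ℤ × ℤ) : ModelPoint := (({v | S.Conn (c.1, v)}, ∅), c.2)

theorem exists_perm_of_rule (i : R) :
    ∃ ρ : Equiv.Perm ModelPoint, (∀ p, Marked (ρ p) ↔ Marked p) ∧
      (∀ v, MulAut.conj ρ (translate (.ofAdd ((S.src i).scale v))) =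
        translate (.ofAdd ((S.dst i).scale v))) ∧
      ρ (S.modelPoint ((S.src i).state, (S.src i).offset)) =
        S.modelPoint ((S.dst i).state, (S.dst i).offset) := by
  obtain ⟨E, hE, hE', hE₀⟩ := exists_chart (S.src i) {v | S.Conn ((S.src i).state, v)}
  obtain ⟨F, hF, hF', hF₀⟩ := exists_chart (S.dst i) {v | S.Conn ((S.dst i).state, v)}
  refine ⟨F⁻¹ * E, fun p => ?_, fun v => ?_, F.injective ?_⟩
  · rw [← hF, ← hE p]
    simp
  · refine mul_inv_eq_of_eq_mul (Equiv.ext fun p => F.injective ?_)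
    simp [hE', hF']
  · rw [Equiv.Perm.mul_apply, modelPoint, modelPoint, hE₀, hF₀, Equiv.Perm.inv_def,
      Equiv.apply_symm_apply]
    simp only [Set.mem_ofPred_eq, S.conn_src_iff_dst]

/-- The unrestricted wreath product of `H` with the group of all permutations of `A`. -/
abbrev PermWreath (A H : Type*) [Group H] : Type _ := (A → H) ⋊[mulAutArrow] Equiv.Perm A

theorem conj_inr_inl {A : Type*} (g : Equiv.Perm A) (F : A → H) :
    MulAut.conj (SemidirectProduct.inr g : PermWreath A H) (SemidirectProduct.inl F) =
      SemidirectProduct.inl (F ∘ g.symm) := by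
  rw [MulAut.conj_apply, ← map_inv]
  exact (SemidirectProduct.inl_aut (φ := mulAutArrow) g F).symm

/-- The group of the model. -/
abbrev ModelGroup : Type := PermWreath ModelPoint (Matrix.SpecialLinearGroup (Fin 2) ℤ)

namespace ModelGroup

open SemidirectProduct

open Classical in
/-- The family supported at `p` with value `T = !![1, 1; 0, 1]`. -/
noncomputable def single (p : ModelPoint) : ModelGroup := inl (Pi.mulSingle p ModularGroup.T)

theorem conj_inr_single (g : Equiv.Perm ModelPoint) (p : ModelPoint) :
    MulAut.conj (inr g) (single p) = single (g p) := by
  rw [single, conj_inr_inl, single]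
  congr 1
  ext1 p'
  simp only [Pi.mulSingle_apply, Function.comp_apply, Equiv.symm_apply_eq]

open Classical in
/-- The family equal to `S = !![0, -1; 1, 0]` at all points that are not marked. -/
noncomputable def separator : ModelGroup := inl fun p => if Marked p then 1 else ModularGroup.S

open Classical in
theorem commute_separator_inr {g : Equiv.Perm ModelPoint} (hg : ∀ p, Marked (g p) ↔ Marked p) :
    Commute separator (inr g) := by
  refine (mul_inv_eq_iff_eq_mul.1 ((conj_inr_inl g _).trans ?_)).symm
  congr 1
  ext1 p
  have hp : Marked (g.symm p) ↔ Marked p := by rw [← hg, g.apply_symm_apply]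
  exact if_congr hp rfl rfl

theorem commute_separator_single {p : ModelPoint} (hp : Marked p) :
    Commute separator (single p) := by
  refine Commute.map (funext fun p' => ?_) inl
  by_cases h : p' = p <;> simp [h, hp]

theorem eq_zero_of_T_zpow_eq_conj_S {m n : ℤ}
    (h : ModularGroup.T ^ m = MulAut.conj ModularGroup.S (ModularGroup.T ^ n)) :
    m = 0 ∧ n = 0 := by
  have h' : ModularGroup.T ^ m * ModularGroup.S = ModularGroup.S * ModularGroup.T ^ n :=
    eq_mul_inv_iff_mul_eq.1 h
  have entry := fun i j => congrFun₂ (congrArg Subtype.val h') i j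
  constructor
  · simpa [ModularGroup.coe_T_zpow, ModularGroup.coe_S] using entry 0 0
  · simpa [ModularGroup.coe_T_zpow, ModularGroup.coe_S, eq_comm] using entry 1 1

theorem eq_zero_of_single_zpow_eq_conj {p : ModelPoint} (hp : ¬ Marked p) {m n : ℤ}
    (h : single p ^ m = MulAut.conj separator (single p ^ n)) : m = 0 ∧ n = 0 := by
  rw [single, separator, ← map_zpow, ← map_zpow, ← map_conj_apply, inl_inj] at h
  apply eq_zero_of_T_zpow_eq_conj_S
  simpa [hp] using congrFun h p

end ModelGroup

section

variable {S} {ρ : R → Equiv.Perm ModelPoint}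

/-- The assignment of the letters in the model, given the permutations that realize the rules. -/
noncomputable def modelLetter (S : RegisterSystem Q R) (ρ : R → Equiv.Perm ModelPoint) :
    Letter Q R → ModelGroup
  | .x => SemidirectProduct.inr (translate (.ofAdd (1, 0)))
  | .y => SemidirectProduct.inr (translate (.ofAdd (0, 1)))
  | .k => ModelGroup.separator
  | .t q => ModelGroup.single (S.modelPoint (q, 0))
  | .r i => SemidirectProduct.inr (ρ i)

theorem zpow_mul_zpow_modelLetter (v : ℤ × ℤ) :
    modelLetter S ρ .x ^ v.1 * modelLetter S ρ .y ^ v.2 =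
      SemidirectProduct.inr (translate (.ofAdd v)) := by
  simp only [modelLetter, ← map_zpow, ← map_mul, ← ofAdd_zsmul, ← ofAdd_add]
  simp

theorem shifted_modelLetter (q : Q) (v : ℤ × ℤ) :
    shifted (modelLetter S ρ) q v = ModelGroup.single (S.modelPoint (q, v)) := by
  rw [shifted, zpow_mul_zpow_modelLetter, modelLetter, ModelGroup.conj_inr_single,
    translate_apply, modelPoint, zero_add]
  rfl

theorem satisfies_modelLetter (hρ : ∀ i p, Marked (ρ i p) ↔ Marked p)
    (hscale : ∀ i v, MulAut.conj (ρ i) (translate (.ofAdd ((S.src i).scale v))) =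
      translate (.ofAdd ((S.dst i).scale v)))
    (hpoint : ∀ i, ρ i (S.modelPoint ((S.src i).state, (S.src i).offset)) =
      S.modelPoint ((S.dst i).state, (S.dst i).offset)) :
    S.Satisfies (modelLetter S ρ) where
  x_y := ((Commute.all _ _).map translate).map SemidirectProduct.inr
  k_r i := ModelGroup.commute_separator_inr (hρ i)
  k_t q hq := ModelGroup.commute_separator_single (p := S.modelPoint (q, 0)) (Conn.base hq)
  r_x i := by
    have h := congrArg (SemidirectProduct.inr : _ → ModelGroup) (hscale i (1, 0))
    simpa [modelLetter, ← map_pow, ← ofAdd_nsmul, ConfigFamily.scale] using h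
  r_y i := by
    have h := congrArg (SemidirectProduct.inr : _ → ModelGroup) (hscale i (0, 1))
    simpa [modelLetter, ← map_pow, ← ofAdd_nsmul, ConfigFamily.scale] using h
  r_t i := by
    rw [shifted_modelLetter, shifted_modelLetter, modelLetter, ModelGroup.conj_inr_single, hpoint]

end

theorem eq_zero_of_shifted_zpow_eq_conj {c : Q × ℤ × ℤ} (hc : ¬ S.Conn c) {m n : ℤ}
    (h : shifted (PresentedGroup.of (rels := S.relators)) c.1 c.2 ^ m =
      MulAut.conj (.of .k) (shifted (PresentedGroup.of (rels := S.relators)) c.1 c.2 ^ n)) :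
    m = 0 ∧ n = 0 := by
  choose ρ hρ hscale hpoint using S.exists_perm_of_rule
  have hf := (S.satisfies_iff _).1 (satisfies_modelLetter hρ hscale hpoint)
  have toGroup_comp_of : PresentedGroup.toGroup hf ∘ PresentedGroup.of = modelLetter S ρ :=
    funext fun _ => PresentedGroup.toGroup.of hf
  have h' := congrArg (PresentedGroup.toGroup hf) h
  rw [map_conj_apply, map_zpow, map_zpow, map_shifted, toGroup_comp_of, PresentedGroup.toGroup.of,
    shifted_modelLetter] at h'
  exact ModelGroup.eq_zero_of_single_zpow_eq_conj (p := S.modelPoint c) hc h'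

end RegisterSystem

end RegisterSystems

section Shear

open Matrix MatrixGroups

section CommRing

variable {K : Type*} [CommRing K]

/-- The unipotent matrix that fixes `(1, s)` and adds to every vector `v` the multiple
`c * (v 1 - s * v 0)` of `(1, s)`. -/
def shear (s c : K) : SL(2, K) :=
  ⟨!![1 - c * s, c; -(c * s ^ 2), 1 + c * s], by rw [det_fin_two_of]; ring⟩

theorem coe_shear (s c : K) :
    (shear s c : Matrix (Fin 2) (Fin 2) K) = !![1 - c * s, c; -(c * s ^ 2), 1 + c * s] := rfl

theorem smul_eq_of_fin_two (A : SL(2, K)) (v : Fin 2 → K) :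
    A • v = ![A 0 0 * v 0 + A 0 1 * v 1, A 1 0 * v 0 + A 1 1 * v 1] := by
  change A.1 *ᵥ v = _
  ext i
  fin_cases i <;> simp [mulVec, dotProduct]

theorem shear_smul (s c : K) (v : Fin 2 → K) :
    shear s c • v = v + (c * (v 1 - s * v 0)) • ![1, s] := by
  rw [smul_eq_of_fin_two]
  ext i
  fin_cases i <;> simp [coe_shear] <;> ring

theorem shear_smul_self (s c : K) : shear s c • ![1, s] = ![1, s] := by
  simp [shear_smul]

theorem shear_add (s c d : K) : shear s (c + d) = shear s c * shear s d := by
  apply Matrix.SpecialLinearGroup.ext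
  intro i j
  rw [Matrix.SpecialLinearGroup.coe_mul, coe_shear, coe_shear, coe_shear, mul_fin_two]
  fin_cases i <;> fin_cases j <;> simp <;> ring

theorem shear_zpow (s c : K) (n : ℤ) : shear s c ^ n = shear s (n * c) := by
  let φ : Multiplicative K →* SL(2, K) :=
    MonoidHom.mk' (fun c => shear s c.toAdd) fun c d => shear_add s c.toAdd d.toAdd
  have h := map_zpow φ (.ofAdd c) n
  rw [← ofAdd_zsmul, zsmul_eq_mul] at h
  exact h.symm

theorem shear_inv (s c : K) : (shear s c)⁻¹ = shear s (-c) := by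
  simpa using shear_zpow s c (-1)

theorem exists_eq_shear_of_smul_eq {A : SL(2, K)} {s : K} (h : A • ![1, s] = ![1, s]) :
    ∃ c, A = shear s c := by
  rw [smul_eq_of_fin_two] at h
  have h0 : A 0 0 + A 0 1 * s = 1 := by simpa using congrFun h 0
  have h1 : A 1 0 + A 1 1 * s = s := by simpa using congrFun h 1
  have hdet : A 0 0 * A 1 1 - A 0 1 * A 1 0 = 1 := (det_fin_two A.1).symm.trans A.det_coe
  have h00 : A 0 0 = 1 - A 0 1 * s := by linear_combination h0
  have h11 : A 1 1 = 1 + A 0 1 * s := by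
    linear_combination hdet - A 1 1 * h0 + A 0 1 * h1
  have h10 : A 1 0 = -(A 0 1 * s ^ 2) := by linear_combination h1 - s * h11
  refine ⟨A 0 1, Subtype.ext ?_⟩
  rw [coe_shear, eta_fin_two A.1]
  ext i j
  fin_cases i <;> fin_cases j
  exacts [h00, rfl, h10, h11]

/-- The deviation of the first column of `g` from the line spanned by `(1, s)`; left multiplication
by `shear s c` adds `c * deviation s g` times `(1, s)` to that column. -/
def deviation (s : ℤ) (g : SL(2, K)) : K := g 1 0 - s * g 0 0

theorem deviation_shear_mul (s : ℤ) (c : K) (g : SL(2, K)) :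
    deviation s (shear (s : K) c * g) = deviation s g := by
  simp [deviation, Matrix.mul_apply, Fin.sum_univ_two, coe_shear]; ring

theorem shear_mul_apply_zero_zero (s : ℤ) (c : K) (g : SL(2, K)) :
    (shear (s : K) c * g) 0 0 = g 0 0 + c * deviation s g := by
  simp [deviation, Matrix.mul_apply, Fin.sum_univ_two, coe_shear]; ring

end CommRing

theorem exists_zpow_eq_shear_zpow_of_smul_eq {A : SL(2, ℚ)} {s c : ℚ} (hc : c ≠ 0)
    (h : A • ![1, s] = ![1, s]) : ∃ m n : ℤ, m ≠ 0 ∧ A ^ m = shear s c ^ n := by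
  obtain ⟨d, rfl⟩ := exists_eq_shear_of_smul_eq h
  refine ⟨(d / c).den, (d / c).num, by exact_mod_cast (d / c).den_nz, ?_⟩
  rw [shear_zpow, shear_zpow, Int.cast_natCast, ← Rat.den_mul_eq_num, mul_assoc,
    div_mul_cancel₀ d hc]

section PingPong

variable {K : Type*} [CommRing K] [LinearOrder K] [IsStrictOrderedRing K]

/-- The attracting ping-pong set of the shears `shear s c` with `c` large: the first column is
close to the line spanned by `(1, s)`, on one side of it. -/
def attracting (s : ℤ) : Set SL(2, K) := {g | 3 * deviation s g ^ 2 ≤ g 0 0 * deviation s g}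

/-- The attracting ping-pong set of the inverses of the shears `shear s c` with `c` large. -/
def repelling (s : ℤ) : Set SL(2, K) := {g | g 0 0 * deviation s g < -(3 * deviation s g ^ 2)}

theorem three_mul_abs_deviation_le {s : ℤ} {g : SL(2, K)} (hg : g ∈ attracting s ∪ repelling s) :
    3 * |deviation s g| ≤ |g 0 0| := by
  have h : 3 * deviation s g ^ 2 ≤ |g 0 0 * deviation s g| :=
    hg.elim (fun h => le_trans h (le_abs_self _))
      fun h => (le_neg_of_le_neg (le_of_lt h)).trans (neg_le_abs _)
  rcases eq_or_ne (deviation s g) 0 with h0 | h0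
  · simp [h0]
  · refine le_of_mul_le_mul_right ?_ (abs_pos.2 h0)
    rwa [mul_assoc, abs_mul_abs_self, ← abs_mul, ← sq]

theorem eq_of_three_mul_abs_deviation_le {s t : ℤ} {g : SL(2, K)}
    (hs : 3 * |deviation s g| ≤ |g 0 0|) (ht : 3 * |deviation t g| ≤ |g 0 0|) : s = t := by
  by_contra hst
  have distance : |g 0 0| ≤ |deviation s g| + |deviation t g| := calc
    |g 0 0| ≤ |((t - s : ℤ) : K)| * |g 0 0| := by
      refine le_mul_of_one_le_left (abs_nonneg _) ?_
      exact_mod_cast Int.one_le_abs (sub_ne_zero.2 (Ne.symm hst))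
    _ = |deviation s g - deviation t g| := by
      rw [← abs_mul, deviation, deviation]; push_cast; ring_nf
    _ ≤ _ := abs_sub _ _
  have h00 : |g 0 0| = 0 := by linarith [abs_nonneg (g 0 0)]
  have hdev : |deviation s g| = 0 := by linarith [abs_nonneg (deviation s g)]
  rw [abs_eq_zero] at h00 hdev
  have h10 : g 1 0 = 0 := by simpa [deviation, h00] using hdev
  have hdet : g 0 0 * g 1 1 - g 0 1 * g 1 0 = 1 := (det_fin_two g.1).symm.trans g.det_coe
  simp [h00, h10] at hdet

theorem disjoint_attracting_repelling (s : ℤ) :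
    Disjoint (attracting s : Set SL(2, K)) (repelling s) :=
  Set.disjoint_left.2 fun g (h : _ ≤ _) (h' : _ < _) => by
    linarith [sq_nonneg (deviation s g)]

theorem shear_mul_mem_attracting {s : ℤ} {c : K} (hc : 6 ≤ c) {g : SL(2, K)}
    (hg : g ∉ repelling s) : shear (s : K) c * g ∈ attracting s := by
  have hg' : -(3 * deviation s g ^ 2) ≤ g 0 0 * deviation s g := not_lt.1 hg
  rw [attracting, Set.mem_ofPred_eq, deviation_shear_mul, shear_mul_apply_zero_zero]
  linarith [mul_le_mul_of_nonneg_right hc (sq_nonneg (deviation s g))]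

theorem shear_inv_mul_mem_repelling {s : ℤ} {c : K} (hc : 6 ≤ c) {g : SL(2, K)}
    (hg : g ∉ attracting s) : (shear (s : K) c)⁻¹ * g ∈ repelling s := by
  have hg' : g 0 0 * deviation s g < 3 * deviation s g ^ 2 := not_le.1 hg
  rw [repelling, Set.mem_ofPred_eq, shear_inv, deviation_shear_mul, shear_mul_apply_zero_zero]
  linarith [mul_le_mul_of_nonneg_right hc (sq_nonneg (deviation s g))]

end PingPong

theorem injective_lift_shear.{u} {K ι : Type u} [CommRing K] [LinearOrder K]
    [IsStrictOrderedRing K] [Nontrivial ι] {s : ι → ℤ} (hs : Function.Injective s) {c : K}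
    (hc : 6 ≤ c) : Function.Injective (FreeGroup.lift fun i => shear (s i : K) c) := by
  have disjoint_of_ne : ∀ {i j}, i ≠ j → Disjoint
      (attracting (s i) ∪ repelling (s i) : Set SL(2, K)) (attracting (s j) ∪ repelling (s j)) :=
    fun hij => Set.disjoint_left.2 fun g hi hj => hs.ne hij <| eq_of_three_mul_abs_deviation_le
      (three_mul_abs_deviation_le hi) (three_mul_abs_deviation_le hj)
  refine FreeGroup.injective_lift_of_ping_pong _ (fun i => attracting (s i))
    (fun i => repelling (s i)) (fun i => ?_)
    (fun i j hij => (disjoint_of_ne hij).mono Set.subset_union_left Set.subset_union_left)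
    (fun i j hij => (disjoint_of_ne hij).mono Set.subset_union_right Set.subset_union_right)
    (fun i j => ?_) (fun i => ?_) (fun i => ?_)
  · refine ⟨⟨!![1, 0; (s i : K), 1], by simp⟩, ?_⟩
    change 3 * ((s i : K) - s i * 1) ^ 2 ≤ 1 * ((s i : K) - s i * 1)
    simp
  · rcases eq_or_ne i j with rfl | hij
    · exact disjoint_attracting_repelling _
    · exact (disjoint_of_ne hij).mono Set.subset_union_left Set.subset_union_right
  · rintro _ ⟨g, hg, rfl⟩
    exact shear_mul_mem_attracting hc hg
  · rintro _ ⟨g, hg, rfl⟩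
    exact shear_inv_mul_mem_repelling hc hg

end Shear

section FibreSquare

theorem fg_map {G H : Type*} [Group G] [Group H] {P : Subgroup G} (hP : P.FG) (φ : G →* H) :
    (P.map φ).FG :=
  (Subgroup.fg_iff_submonoid_fg _).2 (((Subgroup.fg_iff_submonoid_fg _).1 hP).map φ)

theorem exists_mem_map_ne_one_iff {G H : Type*} [Group G] [Group H] {φ : G →* H}
    (hφ : Function.Injective φ) (P : Subgroup G) (p : H → Prop) :
    (∃ h ∈ P.map φ, h ≠ 1 ∧ p h) ↔ ∃ g ∈ P, g ≠ 1 ∧ p (φ g) := by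
  simp only [Subgroup.mem_map, exists_exists_and_eq_and, ne_eq, map_eq_one_iff φ hφ]

variable {F Q : Type*} [Group F] [Group Q] (q : F →* Q)

/-- The fibre product of the homomorphism `q` with itself. -/
def fibreSquare : Subgroup (F × F) :=
  (q.comp (MonoidHom.fst F F)).eqLocus (q.comp (MonoidHom.snd F F))

theorem mem_fibreSquare {g : F × F} : g ∈ fibreSquare q ↔ q g.1 = q g.2 := Iff.rfl

theorem fg_fibreSquare [Group.FG F] {R : Set F} (hR : R.Finite)
    (hq : q.ker = Subgroup.normalClosure R) : (fibreSquare q).FG := by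
  obtain ⟨T, hT, hTfin⟩ := Subgroup.fg_iff _ |>.1 (Group.FG.out (G := F))
  let diag : F →* F × F := (MonoidHom.id F).prod (MonoidHom.id F)
  refine (Subgroup.fg_iff _).2 ⟨diag '' T ∪ MonoidHom.inl F F '' R, ?_,
    (hTfin.image _).union (hR.image _)⟩
  set L := Subgroup.closure (diag '' T ∪ MonoidHom.inl F F '' R)
  have diag_mem : ∀ a, diag a ∈ L := fun a => by
    have hle : (⊤ : Subgroup F) ≤ L.comap diag := hT ▸ (Subgroup.closure_le _).2
      fun t ht => Subgroup.subset_closure (.inl (Set.mem_image_of_mem _ ht))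
    exact hle (Subgroup.mem_top a)
  have ker_le : q.ker ≤ L.comap (MonoidHom.inl F F) := by
    have : (L.comap (MonoidHom.inl F F)).Normal := ⟨fun n hn a => by
      simpa [diag] using mul_mem (mul_mem (diag_mem a) hn) (inv_mem (diag_mem a))⟩
    exact hq ▸ Subgroup.normalClosure_le_normal
      fun w hw => Subgroup.subset_closure (.inr (Set.mem_image_of_mem _ hw))
  refine le_antisymm ((Subgroup.closure_le _).2 ?_) fun g hg => ?_
  · rintro _ (⟨t, -, rfl⟩ | ⟨w, hw, rfl⟩)
    · exact rfl
    · have hw' : w ∈ q.ker := hq ▸ Subgroup.subset_normalClosure hw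
      exact hw'.trans (map_one q).symm
  · have hdiv : g.1 / g.2 ∈ q.ker := by rw [MonoidHom.mem_ker, map_div, div_eq_one]; exact hg
    simpa [diag] using mul_mem (Subgroup.mem_comap.1 (ker_le hdiv)) (diag_mem g.2)

variable {q} {H Ω : Type*} [Group H] [MulAction H Ω] {φ : F →* H} {p : Ω} {k z : F}

theorem conj_smul_smul_eq {w : F} (h : φ z • p = p) :
    φ (MulAut.conj w z) • φ w • p = φ w • p := by
  rw [smul_smul, ← map_mul, MulAut.conj_apply, inv_mul_cancel_right, map_mul, mul_smul, h]

theorem exists_mem_fibreSquare_fixes (hz : z ≠ 1) (hp : φ z • p = p)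
    (hcomm : Commute (q k) (q z)) :
    ∃ g ∈ fibreSquare q, g ≠ 1 ∧ φ g.1 • p = p ∧ φ g.2 • φ k • p = φ k • p := by
  refine ⟨(z, MulAut.conj k z), ?_, fun h => hz (congrArg Prod.fst h), hp, conj_smul_smul_eq hp⟩
  rw [mem_fibreSquare, MulAut.conj_apply, map_mul, map_mul, map_inv, hcomm.eq,
    mul_inv_cancel_right]

theorem not_exists_mem_fibreSquare_fixes [IsMulTorsionFree F]
    (hstab : ∀ a, φ a • p = p → ∃ m n : ℤ, m ≠ 0 ∧ a ^ m = z ^ n)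
    (hsep : ∀ m n : ℤ, q z ^ m = MulAut.conj (q k) (q z ^ n) → m = 0 ∧ n = 0) :
    ¬ ∃ g ∈ fibreSquare q, g ≠ 1 ∧ φ g.1 • p = p ∧ φ g.2 • φ k • p = φ k • p := by
  rintro ⟨⟨a, b⟩, hab, hne, ha, hb⟩
  obtain ⟨m, n, hm, hmn⟩ := hstab a ha
  have hb' : φ (MulAut.conj k⁻¹ b) • p = p := by
    simpa [smul_smul] using conj_smul_smul_eq (w := k⁻¹) hb
  obtain ⟨m', n', hm', hmn'⟩ := hstab _ hb'
  have q_z_zpow : q z ^ n = q a ^ m := by rw [← map_zpow, ← hmn, map_zpow]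
  have q_z_zpow' : MulAut.conj (q k) (q z ^ n') = q b ^ m' := by
    rw [← map_zpow q z, ← hmn', ← map_zpow, MulAut.conj_apply, MulAut.conj_apply]
    simp [mul_assoc]
  obtain ⟨h, h'⟩ := hsep (n * m') (n' * m) <| by
    rw [zpow_mul, zpow_mul, map_zpow, q_z_zpow, q_z_zpow', (mem_fibreSquare q).1 hab,
      ← zpow_mul, ← zpow_mul, mul_comm]
  obtain rfl : n = 0 := by simpa [hm'] using h
  obtain rfl : n' = 0 := by simpa [hm] using h'
  have ha1 : a = 1 := (IsMulTorsionFree.zpow_eq_one_iff_left hm).1 (hmn.trans (zpow_zero z))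
  have hb1 : MulAut.conj k⁻¹ b = 1 :=
    (IsMulTorsionFree.zpow_eq_one_iff_left hm').1 (hmn'.trans (zpow_zero z))
  exact hne (Prod.ext ha1 ((MulEquiv.map_eq_one_iff _).1 hb1))

end FibreSquare

section Stabilizers

open Matrix MatrixGroups

/-- The homomorphism from the free group on `ι` that sends the generators to the shears along the
vectors `(1, s i)`; the factor `6` makes it injective when `s` is. -/
def shearHom {ι : Type*} (s : ι → ℤ) : FreeGroup ι →* SL(2, ℚ) :=
  FreeGroup.lift fun i => shear (s i) 6

theorem shearHom_of {ι : Type*} (s : ι → ℤ) (i : ι) : shearHom s (.of i) = shear (s i : ℚ) 6 :=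
  FreeGroup.lift_apply_of

theorem injective_shearHom {ι : Type} [Nontrivial ι] {s : ι → ℤ} (hs : Function.Injective s) :
    Function.Injective (shearHom s) :=
  injective_lift_shear hs le_rfl

theorem exists_zpow_eq_conj_zpow_of_shearHom_smul_eq {ι : Type} [Nontrivial ι] {s : ι → ℤ}
    (hs : Function.Injective s) {i : ι} {w a : FreeGroup ι}
    (h : shearHom s a • shearHom s w • ![1, (s i : ℚ)] = shearHom s w • ![1, (s i : ℚ)]) :
    ∃ m n : ℤ, m ≠ 0 ∧ a ^ m = MulAut.conj w (.of i) ^ n := by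
  have h' : shearHom s (MulAut.conj w⁻¹ a) • ![1, (s i : ℚ)] = ![1, (s i : ℚ)] := by
    simpa [smul_smul] using conj_smul_smul_eq (w := w⁻¹) h
  obtain ⟨m, n, hm, hmn⟩ := exists_zpow_eq_shear_zpow_of_smul_eq (c := 6) (by simp) h'
  rw [← shearHom_of, ← map_zpow, ← map_zpow, ← map_zpow] at hmn
  refine ⟨m, n, hm, ?_⟩
  calc
    a ^ m = MulAut.conj w (MulAut.conj w⁻¹ (a ^ m)) := by simp [mul_assoc]
    _ = MulAut.conj w (.of i ^ n) := by rw [injective_shearHom hs hmn]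
    _ = MulAut.conj w (.of i) ^ n := map_zpow _ _ _

namespace RegisterSystem

instance {Q R : Type*} : Nontrivial (Letter Q R) := ⟨⟨.x, .y, by simp⟩⟩

variable {Q R : Type} (S : RegisterSystem Q R)

theorem conn_iff_exists_mem_fibreSquare_fixes {s : Letter Q R → ℤ} (hs : Function.Injective s)
    (q : Q) (v : ℤ × ℤ) {p : Fin 2 → ℚ}
    (hp : p = shearHom s (.of .x ^ v.1 * .of .y ^ v.2) • ![1, (s (.t q) : ℚ)]) :
    S.Conn (q, v) ↔ ∃ g ∈ fibreSquare (PresentedGroup.mk S.relators), g ≠ 1 ∧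
      shearHom s g.1 • p = p ∧
      shearHom s g.2 • shearHom s (.of .k) • p = shearHom s (.of .k) • p := by
  let z : FreeGroup (Letter Q R) := shifted .of q v
  have mk_z : PresentedGroup.mk S.relators z = shifted PresentedGroup.of q v := map_shifted _ _ _ _
  constructor
  · intro hc
    have hz : z ≠ 1 := fun h => FreeGroup.of_ne_one _ ((MulEquiv.map_eq_one_iff _).1 h)
    have hzp : shearHom s z • p = p := by
      rw [hp]
      exact conj_smul_smul_eq (by rw [shearHom_of, shear_smul_self])
    refine exists_mem_fibreSquare_fixes hz hzp ?_
    rw [mk_z]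
    exact S.satisfies_of.commute_of_conn (c := (q, v)) hc
  · contrapose
    refine fun hc => not_exists_mem_fibreSquare_fixes (z := z) (fun a ha => ?_) fun m n hmn => ?_
    · exact exists_zpow_eq_conj_zpow_of_shearHom_smul_eq hs (hp ▸ ha)
    · rw [mk_z] at hmn
      exact S.eq_zero_of_shifted_zpow_eq_conj (c := (q, v)) hc hmn

/-- Distinct slopes for the shears that represent the letters. Since `k` and `y` have the slopes `0`
and `1`, the vectors on which the stabilizer problem gets posed have natural coordinates. -/
def slope (f : Q ⊕ R → ℕ) (l : Letter Q R) : ℤ :=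
  (Sum.elim Fin.val (fun z => 3 + f z) l.toSum : ℕ)

theorem injective_slope {f : Q ⊕ R → ℕ} (hf : Function.Injective f) :
    Function.Injective (slope f) :=
  Nat.cast_injective.comp <|
    (Fin.val_injective.sumElim ((add_right_injective 3).comp hf) fun _ _ => by lia).comp
      Letter.toSum_injective

theorem shearHom_y_zpow_smul (f : Q ⊕ R → ℕ) (q : Q) (r : ℕ) :
    shearHom (slope f) (.of .y ^ (r : ℤ)) • ![1, (slope f (.t q) : ℚ)] = fun i =>
      ((![1 + 6 * (f (.inl q) + 2) * r, 3 + f (.inl q) + 6 * (f (.inl q) + 2) * r] i : ℕ) : ℚ) := by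
  rw [map_zpow, shearHom_of, shear_zpow, shear_smul]
  ext i
  fin_cases i <;> simp [slope, Letter.toSum] <;> ring

theorem shearHom_k_smul (f : Q ⊕ R → ℕ) (v : Fin 2 → ℕ) :
    shearHom (slope f) (.of .k) • (fun i => (v i : ℚ)) =
      fun i => ((![v 0 + 6 * v 1, v 1] i : ℕ) : ℚ) := by
  rw [shearHom_of, shear_smul]
  ext i
  fin_cases i <;> simp [slope, Letter.toSum]

theorem exists_fg_conn_iff_fixes [Finite Q] [Finite R] (q : Q) :
    ∃ G : Subgroup (SL(2, ℚ) × SL(2, ℚ)), G.FG ∧ ∃ a b : ℕ → Fin 2 → ℚ, Primrec a ∧ Primrec b ∧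
      ∀ r : ℕ, S.Conn (q, 0, r) ↔ ∃ g ∈ G, g ≠ 1 ∧ g.1 • a r = a r ∧ g.2 • b r = b r := by
  obtain ⟨f, hf⟩ := Countable.exists_injective_nat (Q ⊕ R)
  have hinj := injective_shearHom (injective_slope hf)
  let ψ := (shearHom (slope f)).prodMap (shearHom (slope f))
  have hψ : Function.Injective ψ := hinj.prodMap hinj
  let a : ℕ → Fin 2 → ℕ := fun r =>
    ![1 + 6 * (f (.inl q) + 2) * r, 3 + f (.inl q) + 6 * (f (.inl q) + 2) * r]
  let b : ℕ → Fin 2 → ℕ := fun r => ![a r 0 + 6 * a r 1, a r 1]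
  have primrec_affine : ∀ c d : ℕ, Primrec fun r => c + d * r :=
    fun c d => Primrec.nat_add.comp (.const c) (Primrec.nat_mul.comp (.const d) .id)
  have primrec_a : ∀ i, Primrec fun r => a r i :=
    Fin.forall_fin_two.2 ⟨primrec_affine _ _, primrec_affine _ _⟩
  have primrec_b : ∀ i, Primrec fun r => b r i := Fin.forall_fin_two.2
    ⟨Primrec.nat_add.comp (primrec_a 0) (Primrec.nat_mul.comp (.const 6) (primrec_a 1)),
      primrec_a 1⟩
  refine ⟨(fibreSquare (PresentedGroup.mk S.relators)).map ψ,
    fg_map (fg_fibreSquare _ S.finite_relators (QuotientGroup.ker_mk' _)) _, _, _,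
    primrec_pi_fin fun i => primrec_ratCast.comp (primrec_a i),
    primrec_pi_fin fun i => primrec_ratCast.comp (primrec_b i), fun r => ?_⟩
  rw [exists_mem_map_ne_one_iff hψ, ← shearHom_k_smul f (a r)]
  refine S.conn_iff_exists_mem_fibreSquare_fixes (injective_slope hf) q (0, r) ?_
  rw [zpow_zero, one_mul, shearHom_y_zpow_smul]

end RegisterSystem

section BlockEmbedding

variable {l m o n K : Type*} [Fintype l] [DecidableEq l] [Fintype m] [DecidableEq m] [Fintype o]
  [DecidableEq o] [Fintype n] [DecidableEq n] [CommRing K] (e : n ≃ (l ⊕ m) ⊕ o)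

/-- Pairs of matrices of determinant one as block diagonal matrices completed by an identity
block; the index equivalence `e` assigns the blocks. -/
def blockEmbedding : SpecialLinearGroup l K × SpecialLinearGroup m K →* GL n K :=
  MonoidHom.toHomUnits
    { toFun := fun g => (fromBlocks (fromBlocks g.1.1 0 0 g.2.1) 0 0 1).submatrix e e
      map_one' := by
        simp only [Prod.fst_one, Prod.snd_one, Matrix.SpecialLinearGroup.coe_one, fromBlocks_one,
          submatrix_one_equiv]
      map_mul' := fun g h => by
        simp [submatrix_mul_equiv, fromBlocks_multiply] }

theorem coe_blockEmbedding (g : SpecialLinearGroup l K × SpecialLinearGroup m K) :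
    (blockEmbedding e g : Matrix n n K) =
      (fromBlocks (fromBlocks g.1.1 0 0 g.2.1) 0 0 1).submatrix e e := rfl

theorem injective_blockEmbedding : Function.Injective (blockEmbedding (K := K) e) := by
  intro g h hgh
  have hblocks : fromBlocks (fromBlocks g.1.1 0 0 g.2.1) 0 0 1 =
      fromBlocks (fromBlocks h.1.1 0 0 h.2.1) 0 0 (1 : Matrix o o K) :=
    (Matrix.reindex e.symm e.symm).injective (congrArg Units.val hgh)
  rw [fromBlocks_inj, fromBlocks_inj] at hblocks
  exact Prod.ext (Subtype.ext hblocks.1.1) (Subtype.ext hblocks.1.2.2.2)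

theorem blockEmbedding_mulVec_eq_self_iff (g : SpecialLinearGroup l K × SpecialLinearGroup m K)
    (v : l → K) (w : m → K) :
    (blockEmbedding e g : Matrix n n K) *ᵥ (Sum.elim (Sum.elim v w) 0 ∘ e) =
      Sum.elim (Sum.elim v w) 0 ∘ e ↔ g.1 • v = v ∧ g.2 • w = w := by
  change _ ↔ g.1.1 *ᵥ v = v ∧ g.2.1 *ᵥ w = w
  rw [coe_blockEmbedding, submatrix_mulVec_equiv, e.surjective.injective_comp_right.eq_iff,
    Function.comp_assoc, e.self_comp_symm, Function.comp_id]
  simp [fromBlocks_mulVec, Sum.elim_eq_iff]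

end BlockEmbedding

namespace RegisterSystem

theorem exists_fg_not_computablePred_fixes {Q R : Type} [Finite Q] [Finite R]
    (S : RegisterSystem Q R) (q : Q) {r : ℕ → ℕ} (hr : Computable r)
    (hS : ¬ ComputablePred fun k => S.Conn (q, 0, r k)) {n : ℕ} (hn : 4 ≤ n) :
    ∃ G : Subgroup (GL (Fin n) ℚ), G.FG ∧ ¬ ComputablePred fun u : Fin n → ℚ =>
      ∃ g ∈ G, g ≠ 1 ∧ (g : Matrix (Fin n) (Fin n) ℚ) *ᵥ u = u := by
  obtain ⟨G, hG, a, b, ha, hb, hconn⟩ := S.exists_fg_conn_iff_fixes q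
  let e : Fin n ≃ (Fin 2 ⊕ Fin 2) ⊕ Fin (n - 4) :=
    (finCongr (by lia : n = 2 + 2 + (n - 4))).trans
      (finSumFinEquiv.symm.trans (finSumFinEquiv.symm.sumCongr (Equiv.refl _)))
  let u : ℕ → Fin n → ℚ := fun k => Sum.elim (Sum.elim (a k) (b k)) 0 ∘ e
  have hu : Primrec u := primrec_pi_fin fun i => by
    simp only [u, Function.comp_apply]
    rcases e i with (i | i) | _
    · exact Primrec.fin_app.comp ha (.const i)
    · exact Primrec.fin_app.comp hb (.const i)
    · exact .const 0
  have conn_iff : ∀ k : ℕ, S.Conn (q, 0, k) ↔ ∃ g ∈ G.map (blockEmbedding e), g ≠ 1 ∧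
      (g : Matrix (Fin n) (Fin n) ℚ) *ᵥ u k = u k := fun k => by
    rw [hconn, exists_mem_map_ne_one_iff (injective_blockEmbedding e)]
    simp only [u, blockEmbedding_mulVec_eq_self_iff]
  refine ⟨G.map (blockEmbedding e), fg_map hG _, fun h => hS ?_⟩
  exact ComputablePred.computable_of_manyOneReducible
    ⟨fun k => u (r k), hu.to_comp.comp hr, fun k => conn_iff (r k)⟩ h

end RegisterSystem

end Stabilizers

section TuringMachines

open Turing

/-- An injective assignment of base-`B` digits to the symbols of a tape alphabet that sends the
blank symbol to `0`. -/
structure DigitCode (Γ : Type*) [Inhabited Γ] (B : ℕ) where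
  digit : Γ → Fin B
  digit_default : (digit default : ℕ) = 0
  digit_injective : Function.Injective digit

theorem nonempty_digitCode (Γ : Type*) [Inhabited Γ] [Finite Γ] :
    Nonempty (DigitCode Γ (Nat.card Γ)) := by
  classical
  have : NeZero (Nat.card Γ) := ⟨Nat.card_pos.ne'⟩
  let e : Γ ≃ Fin (Nat.card Γ) :=
    (Finite.equivFin Γ).trans (Equiv.swap (Finite.equivFin Γ default) 0)
  exact ⟨⟨e, by simp [e], e.injective⟩⟩

namespace DigitCode

variable {Γ : Type*} [Inhabited Γ] {B : ℕ} (e : DigitCode Γ B)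

/-- The number with base-`B` digits the list `l`, least significant digit first. -/
def ofList (l : List Γ) : ℕ := l.foldr (fun c n => e.digit c + B * n) 0

theorem ofList_append_replicate (l : List Γ) (n : ℕ) :
    e.ofList (l ++ List.replicate n default) = e.ofList l := by
  have ofList_replicate : e.ofList (List.replicate n default) = 0 := by
    induction n with
    | zero => rfl
    | succ n ih =>
      rw [ofList] at ih
      rw [List.replicate_succ, ofList, List.foldr_cons, ih, e.digit_default, Nat.mul_zero]
  rw [ofList] at ofList_replicate
  rw [ofList, List.foldr_append, ofList_replicate, ofList]

/-- The number that encodes a half-tape. The symbol next to the head is its last digit. -/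
def value (L : ListBlank Γ) : ℕ :=
  L.liftOn e.ofList <| by
    rintro l _ ⟨n, rfl⟩
    exact (e.ofList_append_replicate l n).symm

theorem value_cons (c : Γ) (L : ListBlank Γ) :
    e.value (L.cons c) = e.digit c + B * e.value L := by
  induction L using ListBlank.induction_on with
  | h l => rfl

theorem value_eq_digit_add_iff {L : ListBlank Γ} {c : Γ} {k : ℤ} :
    (e.value L : ℤ) = e.digit c + B * k ↔ ∃ L', L = L'.cons c ∧ (e.value L' : ℤ) = k := by
  constructor
  · intro h
    obtain ⟨d, L, rfl⟩ := L.exists_cons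
    rw [value_cons, Nat.cast_add, Nat.cast_mul] at h
    have digit_eq := congrArg (· % (B : ℤ)) h
    simp only [Int.add_mul_emod_self_left] at digit_eq
    rw [Int.emod_eq_of_lt (by positivity) (mod_cast (e.digit d).2),
      Int.emod_eq_of_lt (by positivity) (mod_cast (e.digit c).2), Nat.cast_inj] at digit_eq
    obtain rfl := e.digit_injective (Fin.ext digit_eq)
    exact ⟨L, rfl, mul_left_cancel₀ (mod_cast (e.digit d).pos.ne') (add_left_cancel h)⟩
  · rintro ⟨L', rfl, rfl⟩
    rw [value_cons, Nat.cast_add, Nat.cast_mul]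

theorem exists_eq_cons_of_value_eq {L L' : ListBlank Γ} {c : Γ}
    (h : e.value L = e.value (L'.cons c)) : ∃ L₀, L = L₀.cons c ∧ e.value L₀ = e.value L' := by
  have value_eq : (e.value L : ℤ) = e.digit c + B * (e.value L' : ℤ) :=
    mod_cast h.trans (e.value_cons c L')
  simpa only [Nat.cast_inj] using e.value_eq_digit_add_iff.1 value_eq

theorem value_injective : Function.Injective e.value := by
  have nth_eq : ∀ (n : ℕ) (L L' : ListBlank Γ), e.value L = e.value L' → L.nth n = L'.nth n := by
    intro n
    induction n with
    | zero =>
      intro L L' h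
      obtain ⟨c, L', rfl⟩ := L'.exists_cons
      obtain ⟨L, rfl, -⟩ := e.exists_eq_cons_of_value_eq h
      simp only [ListBlank.nth_zero, ListBlank.head_cons]
    | succ n ih =>
      intro L L' h
      obtain ⟨c, L', rfl⟩ := L'.exists_cons
      obtain ⟨L, rfl, hL⟩ := e.exists_eq_cons_of_value_eq h
      simpa only [ListBlank.nth_succ, ListBlank.tail_cons] using ih L L' hL
  exact fun L L' h => ListBlank.ext fun n => nth_eq n L L' h

end DigitCode

/-- The family of configurations of a Turing machine with given state `q` and symbol `head` under
the head, where `left` and `right` may prescribe the symbols next to the head. -/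
structure CfgFamily (Γ Λ : Type*) where
  q : Λ
  head : Γ
  left : Option Γ
  right : Option Γ

namespace CfgFamily

variable {Γ Λ : Type*} [Inhabited Γ] {B : ℕ} (e : DigitCode Γ B)

/-- The half-tape `L`, preceded by the symbol `o` if there is one. -/
def push : Option Γ → ListBlank Γ → ListBlank Γ
  | none, L => L
  | some c, L => L.cons c

/-- The member of the family with half-tapes `L` and `R` beyond the prescribed symbols. -/
def cfg (F : CfgFamily Γ Λ) (L R : ListBlank Γ) : TM0.Cfg Γ Λ :=
  ⟨F.q, F.head, push F.left L, push F.right R⟩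

/-- The modulus of the numbers that encode the half-tapes of the form `push o L`. -/
def modulus (B : ℕ) : Option Γ → ℕ
  | none => 1
  | some _ => B

/-- The residue of the numbers that encode the half-tapes of the form `push o L`. -/
def residue : (o : Option Γ) → Fin (modulus B o)
  | none => (0 : Fin 1)
  | some c => e.digit c

theorem value_eq_residue_add_iff {L : ListBlank Γ} {o : Option Γ} {k : ℤ} :
    (e.value L : ℤ) = residue e o + modulus B o * k ↔
      ∃ L', L = push o L' ∧ (e.value L' : ℤ) = k := by
  cases o with
  | none => simp [residue, modulus, push]
  | some c => exact e.value_eq_digit_add_iff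

/-- The family of the register configurations that encode the members of `F`. -/
def toConfigFamily (F : CfgFamily Γ Λ) : ConfigFamily (Λ × Γ) where
  state := (F.q, F.head)
  d := modulus B F.left
  e := modulus B F.right
  a := residue e F.left
  b := residue e F.right

/-- The register configuration that encodes a configuration of a Turing machine: the state together
with the symbol under the head, and the two half-tapes. -/
def encode (c : TM0.Cfg Γ Λ) : (Λ × Γ) × ℤ × ℤ :=
  ((c.q, c.Tape.head), e.value c.Tape.left, e.value c.Tape.right)

theorem encode_injective : Function.Injective (encode e : TM0.Cfg Γ Λ → _) := by
  rintro ⟨q, a, L, R⟩ ⟨q', a', L', R'⟩ h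
  simp only [encode, Prod.mk.injEq, Nat.cast_inj, e.value_injective.eq_iff] at h
  obtain ⟨⟨rfl, rfl⟩, rfl, rfl⟩ := h
  rfl

theorem encode_eq_regs_iff {F : CfgFamily Γ Λ} {c : TM0.Cfg Γ Λ} {v : ℤ × ℤ} :
    encode e c = ((F.toConfigFamily e).state, (F.toConfigFamily e).regs v) ↔
      ∃ L R, c = F.cfg L R ∧ ((e.value L : ℤ), (e.value R : ℤ)) = v := by
  obtain ⟨q, a, L, R⟩ := c
  obtain ⟨v, w⟩ := v
  have regs_eq : (F.toConfigFamily e).regs (v, w) =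
      (residue e F.left + modulus B F.left * v, residue e F.right + modulus B F.right * w) := rfl
  rw [regs_eq]
  simp only [encode, toConfigFamily, cfg, Prod.mk.injEq, TM0.Cfg.mk.injEq, Tape.mk.injEq,
    value_eq_residue_add_iff]
  constructor
  · rintro ⟨⟨hq, ha⟩, ⟨L', hL, hv⟩, R', hR, hw⟩
    exact ⟨L', R', ⟨hq, ha, hL, hR⟩, hv, hw⟩
  · rintro ⟨L', R', ⟨hq, ha, hL, hR⟩, hv, hw⟩
    exact ⟨⟨hq, ha⟩, ⟨L', hL, hv⟩, R', hR, hw⟩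

theorem encode_cfg (F : CfgFamily Γ Λ) (L R : ListBlank Γ) :
    encode e (F.cfg L R) = ((F.toConfigFamily e).state,
      (F.toConfigFamily e).regs (e.value L, e.value R)) :=
  (encode_eq_regs_iff e).2 ⟨L, R, rfl, rfl⟩

end CfgFamily

namespace RegisterSystem

open CfgFamily

variable {Γ Λ : Type*}

/-- Both sides of each rule of the register system simulating a Turing machine, given the value of
its transition function at the state `q` and the symbol `a`. A rule that moves the head is indexed
by the symbol `c` the head moves to; in halting states, the rules indexed by `c` erase the symbol
`c` next to the head. -/
def turingRule (q : Λ) (a c : Γ) :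
    Option (Λ × TM0.Stmt Γ) → Bool → CfgFamily Γ Λ × CfgFamily Γ Λ
  | none, false => (⟨q, a, some c, none⟩, ⟨q, a, none, none⟩)
  | none, true => (⟨q, a, none, some c⟩, ⟨q, a, none, none⟩)
  | some (q', .write b), _ => (⟨q, a, none, none⟩, ⟨q', b, none, none⟩)
  | some (q', .move .right), _ => (⟨q, a, none, some c⟩, ⟨q', c, some a, none⟩)
  | some (q', .move .left), _ => (⟨q, a, some c, none⟩, ⟨q', c, none, some a⟩)

variable [Inhabited Γ] [Inhabited Λ] {B : ℕ} (e : DigitCode Γ B) (M : TM0.Machine Γ Λ)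

/-- The rules of the register system simulating `M`, as rules between configurations of `M`. -/
def turingRules (i : (Λ × Γ) × Γ × Bool) : CfgFamily Γ Λ × CfgFamily Γ Λ :=
  turingRule i.1.1 i.1.2 i.2.1 (M i.1.1 i.1.2) i.2.2

/-- The register system simulating the Turing machine `M`. -/
def ofTuring : RegisterSystem (Λ × Γ) ((Λ × Γ) × Γ × Bool) where
  src i := (turingRules M i).1.toConfigFamily e
  dst i := (turingRules M i).2.toConfigFamily e
  base := {j | M j.1 j.2 = none}

/-- The Turing machine `M` halts when started in the configuration `c`. -/
def Halts (c : TM0.Cfg Γ Λ) : Prop := (StateTransition.eval (TM0.step M) c).Dom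

variable {M} in
theorem halts_of_eq_none {q : Λ} {a : Γ} (h : M q a = none) (L R : ListBlank Γ) :
    Halts M ⟨q, a, L, R⟩ :=
  Part.dom_iff_mem.2
    ⟨_, StateTransition.mem_eval.2 ⟨.refl, by simp only [TM0.step, h, Option.map_none]⟩⟩

variable {M} in
theorem halts_iff_of_step_eq_some {c c' : TM0.Cfg Γ Λ} (h : TM0.step M c = some c') :
    Halts M c ↔ Halts M c' := by
  rw [Halts, Halts, StateTransition.reaches_eval (.single h)]

theorem halts_turingRules_iff (i : (Λ × Γ) × Γ × Bool) (L R : ListBlank Γ) :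
    Halts M ((turingRules M i).1.cfg L R) ↔ Halts M ((turingRules M i).2.cfg L R) := by
  obtain ⟨⟨q, a⟩, c, s⟩ := i
  rcases h : M q a with _ | ⟨q', (_ | _) | b⟩
  · cases s <;> simp only [turingRules, turingRule, h] <;>
      exact iff_of_true (halts_of_eq_none h _ _) (halts_of_eq_none h _ _)
  all_goals
    refine halts_iff_of_step_eq_some ?_
    simp [turingRules, turingRule, cfg, push, TM0.step, Tape.move, Tape.write, h]

theorem conn_encode_turingRules_iff (i : (Λ × Γ) × Γ × Bool) (L R : ListBlank Γ) :
    (ofTuring e M).Conn (encode e ((turingRules M i).1.cfg L R)) ↔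
      (ofTuring e M).Conn (encode e ((turingRules M i).2.cfg L R)) := by
  rw [encode_cfg, encode_cfg]
  exact (ofTuring e M).conn_src_iff_dst i _

variable {M} in
theorem exists_turingRules_of_step_eq_some {c c' : TM0.Cfg Γ Λ} (h : TM0.step M c = some c') :
    ∃ i L R, c = (turingRules M i).1.cfg L R ∧ c' = (turingRules M i).2.cfg L R := by
  obtain ⟨q, a, L, R⟩ := c
  rcases h' : M q a with _ | ⟨q', (_ | _) | b⟩
  · simp [TM0.step, h'] at h
  · obtain ⟨c, L, rfl⟩ := L.exists_cons
    refine ⟨((q, a), c, false), L, R, ?_, ?_⟩ <;>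
      simp_all [turingRules, turingRule, cfg, push, TM0.step, Tape.move]
  · obtain ⟨c, R, rfl⟩ := R.exists_cons
    refine ⟨((q, a), c, false), L, R, ?_, ?_⟩ <;>
      simp_all [turingRules, turingRule, cfg, push, TM0.step, Tape.move]
  · refine ⟨((q, a), a, false), L, R, ?_, ?_⟩ <;>
      simp_all [turingRules, turingRule, cfg, push, TM0.step, Tape.write]

variable {M} in
theorem conn_encode_of_eq_none {q : Λ} {a : Γ} (h : M q a = none) (L R : ListBlank Γ) :
    (ofTuring e M).Conn (encode e ⟨q, a, L, R⟩) := by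
  have erase (c : Γ) (s : Bool) (L R : ListBlank Γ) :=
    conn_encode_turingRules_iff e M ((q, a), c, s) L R
  simp only [turingRules, h] at erase
  induction L using ListBlank.induction_on with | h l
  induction R using ListBlank.induction_on with | h r
  induction l with
  | cons c l ih => exact (erase c false _ _).2 ih
  | nil =>
    induction r with
    | cons c r ih => exact (erase c true _ _).2 ih
    | nil => exact Conn.base h

variable {M} in
theorem exists_halts_of_conn {p : (Λ × Γ) × ℤ × ℤ} (h : (ofTuring e M).Conn p) :
    ∃ c, encode e c = p ∧ Halts M c := by
  induction h with
  | @base j hj => exact ⟨⟨j.1, j.2, .mk [], .mk []⟩, rfl, halts_of_eq_none hj _ _⟩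
  | fwd i v _ ih =>
    obtain ⟨_, hc, halts⟩ := ih
    obtain ⟨L, R, rfl, rfl⟩ := (encode_eq_regs_iff e).1 hc
    exact ⟨_, encode_cfg e _ L R, (halts_turingRules_iff M i L R).1 halts⟩
  | bwd i v _ ih =>
    obtain ⟨_, hc, halts⟩ := ih
    obtain ⟨L, R, rfl, rfl⟩ := (encode_eq_regs_iff e).1 hc
    exact ⟨_, encode_cfg e _ L R, (halts_turingRules_iff M i L R).2 halts⟩

theorem conn_encode_iff_halts (c : TM0.Cfg Γ Λ) :
    (ofTuring e M).Conn (encode e c) ↔ Halts M c := by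
  constructor
  · intro h
    obtain ⟨c', hc', halts⟩ := exists_halts_of_conn e h
    rwa [← encode_injective e hc']
  · intro h
    obtain ⟨b, hb⟩ := Part.dom_iff_mem.1 h
    refine StateTransition.evalInduction hb fun c _ ih => ?_
    rcases h : TM0.step M c with _ | c'
    · exact conn_encode_of_eq_none e (Option.map_eq_none_iff.1 h) _ _
    · obtain ⟨i, L, R, rfl, rfl⟩ := exists_turingRules_of_step_eq_some h
      exact (conn_encode_turingRules_iff e M i L R).2 (ih _ h)

end RegisterSystem

end TuringMachines

section UndecidableHalting

open Turing

theorem bits_eq_bodd_cons_bits_div2 {n : ℕ} (hn : n ≠ 0) :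
    n.bits = n.bodd :: n.div2.bits := by
  conv_lhs => rw [← n.bit_bodd_div2]
  refine Nat.bits_append_bit _ _ fun h => ?_
  by_contra hb
  exact hn (by rw [← n.bit_bodd_div2, h, Bool.eq_false_iff.2 hb]; rfl)

theorem primrec_bits : Primrec Nat.bits := by
  have step : Primrec₂ fun (_ : Unit) (l : List (List Bool)) =>
      if l.length = 0 then some [] else l[l.length.div2]?.map (List.cons l.length.bodd) := by
    have length : Primrec fun p : Unit × List (List Bool) => p.2.length :=
      Primrec.list_length.comp .snd
    exact .ite (Primrec.eq.comp length (.const 0)) (.const _) <| .option_map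
      (Primrec.list_getElem?.comp .snd (Primrec.nat_div2.comp length))
      (Primrec.list_cons.comp ((Primrec.nat_bodd.comp length).comp .fst) .snd)
  refine (Primrec.nat_strong_rec (fun _ => Nat.bits) step fun _ n => ?_).comp (.const ()) .id
  rcases eq_or_ne n 0 with rfl | hn
  · rfl
  · have div2_lt : n.div2 < n := by rw [Nat.div2_val]; lia
    simp [hn, div2_lt, bits_eq_bodd_cons_bits_div2 hn]

theorem exists_toPartrec_code_not_computablePred_dom :
    ∃ c : ToPartrec.Code, ¬ ComputablePred fun n : ℕ => (c.eval [n]).Dom := by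
  have partrec_eval : Partrec fun n : ℕ => (Denumerable.ofNat Nat.Partrec.Code n).eval 0 :=
    Nat.Partrec.Code.eval_part.comp (Computable.ofNat _) (Computable.const 0)
  obtain ⟨c, hc⟩ := ToPartrec.Code.exists_code (Nat.Partrec'.part_iff₁.2 partrec_eval)
  refine ⟨c, fun h => ComputablePred.halting_problem 0 <|
    ComputablePred.computable_of_manyOneReducible
      ⟨Encodable.encode, Computable.encode, fun d => ?_⟩ h⟩
  have eval_eq := hc ⟨[Encodable.encode d], rfl⟩
  simp only at eval_eq
  simp [eval_eq, List.Vector.head]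

open PartrecToTM2

theorem trNat_eq_map_bits (n : ℕ) :
    trNat n = n.bits.map fun b => cond b Γ'.bit1 Γ'.bit0 := by
  have trPosNum_eq (p : PosNum) :
      trPosNum p = (p : ℕ).bits.map fun b => cond b Γ'.bit1 Γ'.bit0 := by
    induction p with
    | one => simp [trPosNum]
    | bit1 p ih =>
      rw [trPosNum, ih, PosNum.cast_bit1, ← two_mul, Nat.bit1_bits]
      rfl
    | bit0 p ih =>
      rw [trPosNum, ih, PosNum.cast_bit0, ← two_mul, Nat.bit0_bits _ (PosNum.cast_pos p).ne']
      rfl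
  rw [trNat]
  conv_rhs => rw [← Num.to_of_nat n]
  cases (n : Num) with
  | zero => rfl
  | pos p => exact trPosNum_eq p

theorem exists_trInit_trList_eq :
    ∃ (a : TM2to1.Γ' K' fun _ => Γ') (d : Bool → TM2to1.Γ' K' fun _ => Γ'),
      ∀ n : ℕ, TM2to1.trInit .main (trList [n]) = a :: n.bits.reverse.map d := by
  refine ⟨(true, Function.update (fun _ => none) .main (some .cons)), fun b =>
    (false, Function.update (fun _ => none) .main (some (cond b .bit1 .bit0))), fun n => ?_⟩
  have reverse_eq : (trList [n]).reverse =
      .cons :: n.bits.reverse.map fun b => cond b .bit1 .bit0 := by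
    simp [trList, trNat_eq_map_bits]
  rw [TM2to1.trInit, reverse_eq]
  exact congrArg (List.cons _) List.map_map

theorem eval_tr_dom_iff (c : ToPartrec.Code) (v : List ℕ) :
    let _ : Inhabited Λ' := ⟨trNormal c .halt⟩
    (TM0.eval (TM1to0.tr (TM2to1.tr tr)) (TM2to1.trInit .main (trList v))).Dom ↔
      (c.eval v).Dom := by
  intro
  have init_eq : TM2.init .main (trList v) = PartrecToTM2.init c v := by
    rw [TM2.init, PartrecToTM2.init]
    congr
    funext k
    cases k <;> rfl
  calc (TM0.eval (TM1to0.tr (TM2to1.tr tr)) (TM2to1.trInit .main (trList v))).Dom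
    _ ↔ (TM1.eval (TM2to1.tr tr) (TM2to1.trInit .main (trList v))).Dom := by rw [TM1to0.tr_eval]
    _ ↔ (TM2.eval tr .main (trList v)).Dom := TM2to1.tr_eval_dom tr .main (trList v)
    _ ↔ (StateTransition.eval (TM2.step tr) (PartrecToTM2.init c v)).Dom := by rw [← init_eq]; rfl
    _ ↔ (c.eval v).Dom := by rw [PartrecToTM2.tr_eval]; rfl

theorem exists_finite_machine {Γ Λ : Type*} [Inhabited Γ] [Inhabited Λ] (M : TM0.Machine Γ Λ)
    {S : Set Λ} (hS : TM0.Supports M S) :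
    ∃ (_ : Inhabited S) (M' : TM0.Machine Γ S), ∀ l, (TM0.eval M' l).Dom ↔ (TM0.eval M l).Dom := by
  classical
  let : Inhabited S := ⟨⟨default, hS.1⟩⟩
  let id' : PointedMap Γ Γ := ⟨id, rfl⟩
  let g : PointedMap Λ S := ⟨fun q => if h : q ∈ S then ⟨q, h⟩ else default, dif_pos hS.1⟩
  refine ⟨inferInstance, M.map id' id' g Subtype.val, fun l => ?_⟩
  have init_eq : (TM0.init l).map id' g = TM0.init l := by
    rw [TM0.map_init]
    exact congrArg _ (List.map_id l)
  have respects := TM0.Machine.map_respects M id' id' g Subtype.val hS (fun _ => rfl)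
    fun q hq => by simp [g, hq]
  exact StateTransition.tr_eval_dom respects ⟨hS.1, init_eq⟩

theorem exists_turingMachine_not_computablePred_dom :
    ∃ (Γ Λ : Type) (_ : Inhabited Γ) (_ : Finite Γ) (_ : Inhabited Λ) (_ : Finite Λ)
      (M : TM0.Machine Γ Λ) (a : Γ) (d : Bool → Γ),
      ¬ ComputablePred fun n : ℕ => (TM0.eval M (a :: n.bits.reverse.map d)).Dom := by
  obtain ⟨c, hc⟩ := exists_toPartrec_code_not_computablePred_dom
  let : Inhabited Λ' := ⟨trNormal c .halt⟩
  let : Fintype K' := ⟨{.main, .rev, .aux, .stack}, fun k => by cases k <;> simp⟩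
  have : Finite (TM2to1.Γ' K' fun _ => Γ') := Finite.of_fintype _
  obtain ⟨_, M, hM⟩ := exists_finite_machine _ (TM1to0.tr_supports _
    (TM2to1.tr_supports tr (tr_supports c .halt)))
  obtain ⟨a, d, input_eq⟩ := exists_trInit_trList_eq
  refine ⟨_, _, inferInstance, this, inferInstance, inferInstance, M, a, d,
    fun h => hc (h.of_eq fun n => ?_)⟩
  rw [hM, ← input_eq]
  exact eval_tr_dom_iff c [n]

theorem DigitCode.primrec_ofList_map {Γ α : Type*} [Inhabited Γ] [Primcodable α] [Finite α] {B : ℕ}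
    (e : DigitCode Γ B) (d : α → Γ) : Primrec fun l : List α => e.ofList (l.map d) := by
  simp only [DigitCode.ofList, List.foldr_map]
  have digit : Primrec fun p : List α × α × ℕ => (e.digit (d p.2.1) : ℕ) :=
    (Primrec.dom_finite fun b => (e.digit (d b) : ℕ)).comp (.comp .fst .snd)
  have step : Primrec₂ fun (_ : List α) (p : α × ℕ) => (e.digit (d p.1) : ℕ) + B * p.2 :=
    Primrec.nat_add.comp digit (Primrec.nat_mul.comp (.const B) (.comp .snd .snd))
  exact Primrec.list_foldr .id (.const 0) step

namespace RegisterSystem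

theorem conn_encode_init_iff {Γ Λ : Type*} [Inhabited Γ] [Inhabited Λ] {B : ℕ} (e : DigitCode Γ B)
    (M : TM0.Machine Γ Λ) (a : Γ) (l : List Γ) :
    (ofTuring e M).Conn ((default, a), 0, e.ofList l) ↔ (TM0.eval M (a :: l)).Dom :=
  conn_encode_iff_halts e M (TM0.init (a :: l))

theorem exists_not_computablePred_conn :
    ∃ (Q R : Type) (_ : Finite Q) (_ : Finite R) (S : RegisterSystem Q R) (q : Q) (r : ℕ → ℕ),
      Computable r ∧ ¬ ComputablePred fun k => S.Conn (q, 0, r k) := by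
  obtain ⟨Γ, Λ, _, _, _, _, M, a, d, hM⟩ := exists_turingMachine_not_computablePred_dom
  obtain ⟨e⟩ := nonempty_digitCode Γ
  refine ⟨Λ × Γ, _, inferInstance, inferInstance, ofTuring e M, (default, a),
    fun k => e.ofList (k.bits.reverse.map d), ?_, ?_⟩
  · exact (e.primrec_ofList_map d).to_comp.comp
      (Primrec.list_reverse.comp primrec_bits).to_comp
  · simpa only [conn_encode_init_iff] using hM

end RegisterSystem

end UndecidableHalting

theorem exists_list_closure_eq_of_fg {M : Type*} [Monoid M] {G : Subgroup Mˣ} (hG : G.FG) :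
    ∃ X : List M, (∀ a ∈ X, IsUnit a) ∧ Subgroup.closure {g : Mˣ | (g : M) ∈ X} = G := by
  obtain ⟨T, rfl⟩ := hG
  refine ⟨T.toList.map Units.val, fun a ha => ?_, ?_⟩
  · obtain ⟨g, -, rfl⟩ := List.mem_map.1 ha
    exact g.isUnit
  · congr 1
    ext g
    simp [Units.val_inj]

theorem stabilizer_problem_undecidable_general {n : ℕ} (hn : 4 ≤ n) :
    ∃ X : List (Matrix (Fin n) (Fin n) ℚ), (∀ M ∈ X, IsUnit M) ∧
      ¬ ComputablePred fun u : Fin n → ℚ =>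
        ∃ g ∈ Subgroup.closure {g : GL (Fin n) ℚ | (g : Matrix (Fin n) (Fin n) ℚ) ∈ X},
          g ≠ 1 ∧ (g : Matrix (Fin n) (Fin n) ℚ).mulVec u = u := by
  obtain ⟨Q, R, _, _, S, q, r, hr, hS⟩ := RegisterSystem.exists_not_computablePred_conn
  obtain ⟨G, hG, hfixes⟩ := S.exists_fg_not_computablePred_fixes q hr hS hn
  obtain ⟨X, hX, rfl⟩ := exists_list_closure_eq_of_fg hG
  exact ⟨X, hX, hfixes⟩

/-- **Undecidability of the stabilizer problem over `ℚ`.**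
For `n ≥ 9`, there is no computable function that, given a finite list `X` of
invertible `n × n` rational matrices together with a vector `u ∈ ℚⁿ`, decides
whether some non-identity element of the subgroup of `GL_n(ℚ)` generated by
`X` fixes `u`. -/
theorem stabilizer_problem_undecidable (n : ℕ) (hn : 9 ≤ n) :
    ¬ ∃ f : List (Matrix (Fin n) (Fin n) ℚ) × (Fin n → ℚ) → Bool, Computable f ∧
      ∀ (X : List (Matrix (Fin n) (Fin n) ℚ)) (u : Fin n → ℚ),
        (∀ M ∈ X, IsUnit M) →
        (f (X, u) = true ↔
          ∃ g ∈ Subgroup.closure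
              {g : GL (Fin n) ℚ | (g : Matrix (Fin n) (Fin n) ℚ) ∈ X},
            g ≠ 1 ∧ (g : Matrix (Fin n) (Fin n) ℚ).mulVec u = u) := by
  rintro ⟨f, hf, hspec⟩
  obtain ⟨X, hX, hfixes⟩ := stabilizer_problem_undecidable_general (n := n) (by lia)
  refine hfixes (ComputablePred.computable_iff.2 ⟨fun u => f (X, u), ?_, ?_⟩)
  · exact hf.comp ((Computable.const X).pair .id)
  · exact funext fun u => propext (hspec X u hX).symm
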